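/- arXiv:0909.1599 — 2 statements merged into one kernel-verified Lean document; each statement's English description precedes it below -/
import Mathlib

section
/- Let N ≥ 1 and M = N+1, and let Φ = {φ_k}_{k=1}^M be the real harmonic tight frame of M vectors in ℝ^N. Then for all 1 ≤ k < ℓ ≤ M, the inner product satisfies ⟨φ_k, φ_ℓ⟩ = (−1)^{k−ℓ+1}/N. -/
/-- The real harmonic tight frame of `M` vectors in `ℝ^N` (0-based indexing: `htf N M k`
is the vector `φ_{k+1}` of the paper, for `k = 0, …, M-1`). -/
noncomputable def htf (N M : ℕ) (k : Fin M) (i : Fin N) : ℝ :=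
  if N % 2 = 0 then
    if (i : ℕ) < N / 2 then
      Real.sqrt (2 / N) * Real.cos (((2 * (i : ℕ) + 1 : ℕ) : ℝ) * (k : ℕ) * Real.pi / M)
    else
      Real.sqrt (2 / N) *
        Real.sin (((2 * ((i : ℕ) - N / 2) + 1 : ℕ) : ℝ) * (k : ℕ) * Real.pi / M)
  else
    if (i : ℕ) = 0 then Real.sqrt (2 / N) * (1 / Real.sqrt 2)
    else if (i : ℕ) ≤ (N - 1) / 2 then
      Real.sqrt (2 / N) * Real.cos (((2 * (i : ℕ) : ℕ) : ℝ) * (k : ℕ) * Real.pi / M)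
    else
      Real.sqrt (2 / N) *
        Real.sin (((2 * ((i : ℕ) - (N - 1) / 2) : ℕ) : ℝ) * (k : ℕ) * Real.pi / M)

/-!
The sine and cosine entries of two frame vectors pair up through the addition formula for the
cosine, so `⟨φ_k, φ_ℓ⟩` is a sum of cosines in arithmetic progression. In either parity of `N` it
equals the Dirichlet kernel `sin (N θ) / (N sin θ)` at `θ = (ℓ - k) π / M`. When `M = N + 1`,
`N θ = (ℓ - k) π - θ`, and the quotient of sines is a sign.
-/

open Finset Real

theorem two_mul_sin_mul_sum_cos_odd_mul (t : ℝ) (n : ℕ) :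
    2 * sin t * ∑ j ∈ range n, cos ((2 * j + 1) * t) = sin (2 * n * t) := by
  have progression : sin t * ∑ j ∈ range n, cos ((2 * j + 1) * t) =
      sin (n * t) * cos (n * t) := by
    convert sin_mul_sum_cos n (2 * t) t using 4 <;> ring
  rw [mul_assoc, progression, ← mul_assoc, ← sin_two_mul, mul_assoc]

theorem sin_mul_one_add_two_mul_sum_cos_even_mul (t : ℝ) (n : ℕ) :
    sin t * (1 + 2 * ∑ j ∈ range n, cos (2 * (j + 1) * t)) = sin ((2 * n + 1) * t) := by
  have progression : sin t * ∑ j ∈ range n, cos (2 * (j + 1) * t) =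
      sin (n * t) * cos ((n + 1) * t) := by
    convert sin_mul_sum_cos n (2 * t) (2 * t) using 4 <;> ring
  calc sin t * (1 + 2 * ∑ j ∈ range n, cos (2 * (j + 1) * t))
      = sin t + 2 * (sin (n * t) * cos ((n + 1) * t)) := by rw [← progression]; ring
    _ = sin ((n + 1) * t - n * t) + 2 * (sin (n * t) * cos ((n + 1) * t)) := by ring_nf
    _ = sin ((n + 1) * t + n * t) := by rw [sin_sub, sin_add]; ring
    _ = sin ((2 * n + 1) * t) := by ring_nf

theorem sin_nat_mul_nat_mul_pi_div_succ (N d : ℕ) :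
    sin (N * (d * π / (N + 1))) = (-1) ^ (d + 1) * sin (d * π / (N + 1)) := by
  have angle_eq : N * (d * π / (N + 1)) = d * π - d * π / (N + 1) := by
    field_simp
    ring
  rw [angle_eq, sin_nat_mul_pi_sub]
  ring

theorem sin_nat_mul_pi_div_pos {d M : ℕ} (hd : 0 < d) (hdM : d < M) : 0 < sin (d * π / M) := by
  have hM : (0 : ℝ) < M := by exact_mod_cast hd.trans hdM
  refine sin_pos_of_pos_of_lt_pi (by positivity) ?_
  rw [div_lt_iff₀ hM, mul_comm]
  gcongr

theorem mul_cos_mul_mul_cos_add_mul_sin_mul_mul_sin (r c x y : ℝ) :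
    r * cos (c * x) * (r * cos (c * y)) + r * sin (c * x) * (r * sin (c * y)) =
      r ^ 2 * cos (c * (y - x)) := by
  rw [mul_sub, cos_sub]
  ring

section HarmonicFrame

variable {M : ℕ} (n : ℕ) (k l : Fin M)

theorem htf_even_castAdd (j : Fin n) :
    htf (n + n) M k (j.castAdd n) = √(2 / (n + n : ℕ)) * cos ((2 * j + 1) * (k * π / M)) := by
  have hmod : (n + n) % 2 = 0 := by lia
  have hdiv : (n + n) / 2 = n := by lia
  simp only [htf, hmod, hdiv, Fin.val_castAdd, j.isLt, if_true]
  push_cast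
  ring_nf

theorem htf_even_natAdd (j : Fin n) :
    htf (n + n) M k (j.natAdd n) = √(2 / (n + n : ℕ)) * sin ((2 * j + 1) * (k * π / M)) := by
  have hmod : (n + n) % 2 = 0 := by lia
  have hdiv : (n + n) / 2 = n := by lia
  have hlt : ¬ n + (j : ℕ) < n := by lia
  simp only [htf, hmod, hdiv, Fin.val_natAdd, hlt, if_true, if_false, add_tsub_cancel_left]
  push_cast
  ring_nf

theorem htf_odd_zero : htf (n + n + 1) M k 0 = √(2 / (n + n + 1 : ℕ)) * (1 / √2) := by
  have hmod : ¬ (n + n + 1) % 2 = 0 := by lia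
  simp only [htf, hmod, Fin.val_zero, if_true, if_false]

theorem htf_odd_succ_castAdd (j : Fin n) :
    htf (n + n + 1) M k (j.castAdd n).succ =
      √(2 / (n + n + 1 : ℕ)) * cos (2 * (j + 1) * (k * π / M)) := by
  have hmod : ¬ (n + n + 1) % 2 = 0 := by lia
  have hdiv : (n + n + 1 - 1) / 2 = n := by lia
  have hle : (j : ℕ) + 1 ≤ n := j.isLt
  simp only [htf, hmod, hdiv, Fin.val_succ, Fin.val_castAdd, hle, Nat.succ_ne_zero, if_true,
    if_false]
  push_cast
  ring_nf

theorem htf_odd_succ_natAdd (j : Fin n) :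
    htf (n + n + 1) M k (j.natAdd n).succ =
      √(2 / (n + n + 1 : ℕ)) * sin (2 * (j + 1) * (k * π / M)) := by
  have hmod : ¬ (n + n + 1) % 2 = 0 := by lia
  have hdiv : (n + n + 1 - 1) / 2 = n := by lia
  have hle : ¬ n + (j : ℕ) + 1 ≤ n := by lia
  have hsub : n + (j : ℕ) + 1 - n = j + 1 := by lia
  simp only [htf, hmod, hdiv, Fin.val_succ, Fin.val_natAdd, hle, hsub, Nat.succ_ne_zero, if_false]
  push_cast
  ring_nf

theorem sum_htf_even_mul_htf_even :
    ∑ i, htf (n + n) M k i * htf (n + n) M l i =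
      2 / (n + n : ℕ) * ∑ j ∈ range n, cos ((2 * j + 1) * (l * π / M - k * π / M)) := by
  rw [Fin.sum_univ_add, ← sum_add_distrib, sum_range, mul_sum]
  refine sum_congr rfl fun j _ ↦ ?_
  rw [htf_even_castAdd, htf_even_castAdd, htf_even_natAdd, htf_even_natAdd,
    mul_cos_mul_mul_cos_add_mul_sin_mul_mul_sin, sq_sqrt (by positivity)]

theorem sum_htf_odd_mul_htf_odd :
    ∑ i, htf (n + n + 1) M k i * htf (n + n + 1) M l i =
      1 / (n + n + 1 : ℕ) *
        (1 + 2 * ∑ j ∈ range n, cos (2 * (j + 1) * (l * π / M - k * π / M))) := by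
  have norm_sq : √(2 / (n + n + 1 : ℕ)) ^ 2 = 2 / (n + n + 1 : ℕ) := sq_sqrt (by positivity)
  have constant_term : htf (n + n + 1) M k 0 * htf (n + n + 1) M l 0 = 1 / (n + n + 1 : ℕ) := by
    rw [htf_odd_zero, htf_odd_zero, ← sq, mul_pow, norm_sq, div_pow, sq_sqrt zero_le_two]
    ring
  rw [Fin.sum_univ_succ, constant_term, Fin.sum_univ_add, ← sum_add_distrib, sum_range, mul_add,
    mul_one, ← mul_assoc, one_div_mul_eq_div, mul_sum]
  congr 1
  refine sum_congr rfl fun j _ ↦ ?_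
  rw [htf_odd_succ_castAdd, htf_odd_succ_castAdd, htf_odd_succ_natAdd, htf_odd_succ_natAdd,
    mul_cos_mul_mul_cos_add_mul_sin_mul_mul_sin, norm_sq]

theorem sin_mul_sum_htf_mul_htf (N : ℕ) :
    sin (l * π / M - k * π / M) * ∑ i, htf N M k i * htf N M l i =
      sin (N * (l * π / M - k * π / M)) / N := by
  obtain ⟨n, rfl | rfl⟩ := N.even_or_odd'
  · rw [two_mul, sum_htf_even_mul_htf_even, Nat.cast_add, ← two_mul,
      ← two_mul_sin_mul_sum_cos_odd_mul]
    ring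
  · rw [two_mul, sum_htf_odd_mul_htf_odd, Nat.cast_succ, Nat.cast_add, ← two_mul,
      ← sin_mul_one_add_two_mul_sum_cos_even_mul]
    ring

end HarmonicFrame

/-- For `M = N + 1`, the real harmonic tight frame `Φ = {φ_k}` satisfies
`⟨φ_k, φ_ℓ⟩ = (-1)^{k-ℓ+1} / N` for all `1 ≤ k < ℓ ≤ M` (with `htf N M k = φ_{k+1}`;
since `(-1)^{k-ℓ+1} = (-1)^{ℓ-k+1}`, the exponent is written with the positive difference). -/
theorem stmt13 {N : ℕ} (hN : 1 ≤ N) (M : ℕ) (hM : M = N + 1)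
    (k ℓ : Fin M) (hkl : k < ℓ) :
    ∑ i : Fin N, htf N M k i * htf N M ℓ i =
      (-1 : ℝ) ^ ((ℓ : ℕ) - (k : ℕ) + 1) / N := by
  set d : ℕ := ℓ - k with hd
  have angle_eq : ℓ * π / M - k * π / M = d * π / M := by
    rw [hd, Nat.cast_sub hkl.le]
    ring
  have sin_angle_pos : 0 < sin (d * π / M) := sin_nat_mul_pi_div_pos (by lia) (by lia)
  have sin_nat_mul_angle : sin (N * (d * π / M)) = (-1) ^ (d + 1) * sin (d * π / M) := by
    rw [hM, Nat.cast_succ]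
    exact sin_nat_mul_nat_mul_pi_div_succ N d
  have dirichlet_kernel := sin_mul_sum_htf_mul_htf k ℓ N
  rw [angle_eq, sin_nat_mul_angle] at dirichlet_kernel
  refine mul_left_cancel₀ sin_angle_pos.ne' ?_
  rw [dirichlet_kernel]
  ring
end

section
/- Let M ≥ 3 and let A ∈ ℝ^{M×M} have entries a_{k,j}. If a_{k,1} ≠ a_{ℓ,1} for some indices 1 < k < ℓ ≤ M, then there exist a permutation matrix O, a composition m of M, and a Variant II initial codeword ŷ_init compatible with m such that the inequality D(m) O A O^{−1} ŷ_init ≥ 0 (elementwise) fails. -/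
/-- `D(m) z ≥ 0` elementwise: `z` is `m`-descending. -/
def DescIneq {M : ℕ} (c : Composition M) (z : Fin M → ℝ) : Prop :=
  ∀ k ℓ : Fin M, (c.index k : ℕ) + 1 = (c.index ℓ : ℕ) → z ℓ ≤ z k

/-- A Variant II initial codeword compatible with the composition `m`. -/
def VarIICodeword {M : ℕ} (c : Composition M) (y : Fin M → ℝ) : Prop :=
  (∀ k ℓ : Fin M, c.index k = c.index ℓ → y k = y ℓ) ∧
  (∀ k ℓ : Fin M, (c.index k : ℕ) < (c.index ℓ : ℕ) → y ℓ < y k) ∧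
  (∀ k : Fin M, 0 ≤ y k)


/-!
Suppose `A k j < A ℓ j` with `j`, `k`, `ℓ` distinct. Conjugating `A` by a permutation that sends
`0, 1, 2` to `j, k, ℓ` moves these two entries to positions `(1, 0)` and `(2, 0)`. With all blocks
of size one, a codeword is a strictly decreasing nonnegative vector, and its largest entry may be
increased freely: once that entry dominates, entry `1` of the image is less than entry `2`.
-/

open Filter Matrix

theorem coe_index_ones {n : ℕ} (i : Fin n) : ((Composition.ones n).index i : ℕ) = i := by
  have lower := (Composition.ones n).sizeUpTo_index_le i
  have upper := (Composition.ones n).lt_sizeUpTo_index_succ i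
  simp only [Composition.ones_sizeUpTo, Fin.val_succ] at lower upper
  omega

theorem varIICodeword_ones_iff {n : ℕ} {y : Fin n → ℝ} :
    VarIICodeword (Composition.ones n) y ↔ StrictAnti y ∧ 0 ≤ y := by
  simp only [VarIICodeword, Fin.ext_iff, coe_index_ones, Pi.le_def, Pi.zero_apply]
  exact ⟨fun ⟨_, anti, nonneg⟩ ↦ ⟨fun i j hij ↦ anti i j hij, nonneg⟩, fun ⟨anti, nonneg⟩ ↦
    ⟨fun i j hij ↦ congrArg y (Fin.ext hij), fun _ _ hij ↦ anti hij, nonneg⟩⟩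

theorem descIneq_ones_iff_antitone {n : ℕ} {z : Fin n → ℝ} :
    DescIneq (Composition.ones n) z ↔ Antitone z := by
  simp only [DescIneq, coe_index_ones]
  refine ⟨fun desc ↦ ?_, fun anti i j hij ↦ anti (Fin.le_def.2 (by omega))⟩
  cases n with
  | zero => exact fun i ↦ i.elim0
  | succ n => exact Fin.antitone_iff_succ_le.2 fun i ↦ desc _ _ (by simp)

theorem permMatrix_mul_mul_permMatrix_inv {n R : Type*} [Fintype n] [DecidableEq n]
    [NonAssocSemiring R] (σ : Equiv.Perm n) (A : Matrix n n R) :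
    σ.permMatrix R * A * σ⁻¹.permMatrix R = A.submatrix σ σ := by
  rw [Equiv.Perm.permMatrix, Equiv.Perm.permMatrix, PEquiv.toMatrix_toPEquiv_mul,
    PEquiv.mul_toMatrix_toPEquiv]
  rfl

theorem antitone_single_bot {ι R : Type*} [PartialOrder ι] [OrderBot ι] [DecidableEq ι]
    [Zero R] [Preorder R] {t : R} (ht : 0 ≤ t) : Antitone (Pi.single ⊥ t : ι → R) := by
  intro i j hij
  rcases eq_or_ne j ⊥ with rfl | hj
  · rw [le_bot_iff.1 hij]
  · rw [Pi.single_eq_of_ne hj]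
    exact (Pi.single_nonneg.2 ht : (0 : ι → R) ≤ Pi.single ⊥ t) i

section OrderedField

variable {m K : Type*} [Field K] [LinearOrder K] [IsStrictOrderedRing K]

theorem exists_nonneg_mulVec_add_single_lt {n : Type*} [Fintype n] [DecidableEq n]
    (B : Matrix m n K) (u : n → K) {r s : m} {j : n} (hrs : B r j < B s j) :
    ∃ t : K, 0 ≤ t ∧ (B *ᵥ (u + Pi.single j t)) r < (B *ᵥ (u + Pi.single j t)) s := by
  obtain ⟨t, ht, t_large⟩ : ∃ t : K, 0 ≤ t ∧ (B *ᵥ u) r - (B *ᵥ u) s < t * (B s j - B r j) :=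
    ((eventually_ge_atTop 0).and
      ((tendsto_id.atTop_mul_const (sub_pos.2 hrs)).eventually_gt_atTop _)).exists
  refine ⟨t, ht, ?_⟩
  simp only [mulVec_add, mulVec_single, Pi.add_apply, Pi.smul_apply, col_apply,
    MulOpposite.smul_eq_mul_unop, MulOpposite.unop_op]
  linarith

theorem exists_strictAnti_nonneg_mulVec_lt {n : ℕ} (B : Matrix m (Fin (n + 1)) K)
    {r s : m} (hrs : B r 0 < B s 0) :
    ∃ y : Fin (n + 1) → K, StrictAnti y ∧ 0 ≤ y ∧ (B *ᵥ y) r < (B *ᵥ y) s := by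
  obtain ⟨u, u_strictAnti, u_nonneg⟩ : ∃ u : Fin (n + 1) → K, StrictAnti u ∧ 0 ≤ u :=
    ⟨fun i ↦ (i.rev : ℕ), fun _ _ hij ↦ Nat.cast_lt.2 (Fin.rev_lt_rev.2 hij),
      fun i ↦ Nat.cast_nonneg (α := K) i.rev⟩
  obtain ⟨t, ht, image_lt⟩ := exists_nonneg_mulVec_add_single_lt B u hrs
  have single_antitone : Antitone (Pi.single 0 t : Fin (n + 1) → K) := antitone_single_bot ht
  have single_nonneg : (0 : Fin (n + 1) → K) ≤ Pi.single 0 t := Pi.single_nonneg.2 ht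
  exact ⟨u + Pi.single 0 t, u_strictAnti.add_antitone single_antitone,
    fun i ↦ add_nonneg (u_nonneg i) (single_nonneg i), image_lt⟩

end OrderedField

theorem exists_perm_castLE_eq_vecCons {n : ℕ} {j k ℓ : Fin n} (hn : 3 ≤ n)
    (hjk : j ≠ k) (hjℓ : j ≠ ℓ) (hkℓ : k ≠ ℓ) :
    ∃ σ : Equiv.Perm (Fin n), ∀ i : Fin 3, σ (i.castLE hn) = ![j, k, ℓ] i := by
  have vec_injective : Function.Injective ![j, k, ℓ] := by
    simp [Function.Injective, Fin.forall_fin_succ, hjk, hjℓ, hkℓ, hjk.symm, hjℓ.symm, hkℓ.symm]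
  exact Equiv.Perm.exists_extending_pair _ _ (Fin.castLE_injective hn) vec_injective

theorem stmt15_general {M : ℕ} (A : Matrix (Fin M) (Fin M) ℝ) {j k ℓ : Fin M}
    (hjk : j ≠ k) (hjℓ : j ≠ ℓ) (hne : A k j ≠ A ℓ j) :
    ∃ (σ : Equiv.Perm (Fin M)) (c : Composition M) (y : Fin M → ℝ),
      VarIICodeword c y ∧
      ¬ DescIneq c (((σ.permMatrix ℝ) * A * ((σ⁻¹).permMatrix ℝ)) *ᵥ y) := by
  wlog hlt : A k j < A ℓ j generalizing k ℓ
  · exact this hjℓ hjk hne.symm (hne.lt_or_gt.resolve_left hlt)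
  have hkℓ : k ≠ ℓ := fun h ↦ hne (h ▸ rfl)
  have three_le : 3 ≤ M := by
    rw [← Fintype.card_fin M]
    exact Fintype.two_lt_card_iff.2 ⟨j, k, ℓ, hjk, hjℓ, hkℓ⟩
  obtain ⟨σ, hσ⟩ := exists_perm_castLE_eq_vecCons three_le hjk hjℓ hkℓ
  obtain ⟨n, rfl⟩ : ∃ n, M = n + 1 := Nat.exists_eq_add_of_le' (by omega)
  have entry_lt : A.submatrix σ σ (Fin.castLE three_le 1) 0 <
      A.submatrix σ σ (Fin.castLE three_le 2) 0 := by
    rw [submatrix_apply, submatrix_apply, hσ 1, hσ 2, show σ 0 = j from hσ 0]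
    exact hlt
  obtain ⟨y, y_strictAnti, y_nonneg, image_lt⟩ := exists_strictAnti_nonneg_mulVec_lt _ entry_lt
  refine ⟨σ, Composition.ones _, y, varIICodeword_ones_iff.2 ⟨y_strictAnti, y_nonneg⟩, ?_⟩
  rw [permMatrix_mul_mul_permMatrix_inv, descIneq_ones_iff_antitone]
  exact fun anti ↦ image_lt.not_ge (anti (Fin.le_def.2 one_le_two))

open Matrix in
/-- If `M ≥ 3` and two entries of the first column of `A` below the first row differ
(`a_{k,1} ≠ a_{ℓ,1}` for some `1 < k < ℓ`), then there exist a permutation matrix `O`,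
a composition `m` of `M` and a Variant II initial codeword `ŷ_init` compatible with `m` such
that the inequality `D(m) O A O⁻¹ ŷ_init ≥ 0` fails. -/
theorem stmt15 {M : ℕ} (hM : 3 ≤ M) (A : Matrix (Fin M) (Fin M) ℝ)
    (k ℓ : Fin M) (hk : 1 ≤ (k : ℕ)) (hkl : k < ℓ)
    (hne : A k ⟨0, by omega⟩ ≠ A ℓ ⟨0, by omega⟩) :
    ∃ (σ : Equiv.Perm (Fin M)) (c : Composition M) (y : Fin M → ℝ),
      VarIICodeword c y ∧
      ¬ DescIneq c (((σ.permMatrix ℝ) * A * ((σ⁻¹).permMatrix ℝ)) *ᵥ y) :=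
  stmt15_general A (Fin.ne_of_lt hk) (Fin.ne_of_lt (hk.trans hkl.le)) hne
end
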